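/- arXiv:1812.08897 — 3 statements merged into one kernel-verified Lean document; each statement's English description precedes it below -/
import Mathlib

section
/- Let M be a projective left R-module such that every submodule of M is M-generated, and assume M is strongly harmonic and Λ^{fi}(M) is compact. Then the map Θ : mx^fi(M) → pt(Ψ(M)) given by Θ(𝓜) = Ler(𝓜) is a homeomorphism, where mx^fi(M) carries the hull-kernel topology and pt(Ψ(M)) carries the topology whose open sets are generated by U(N) = {p ∈ pt(Ψ(M)) : N ⊄ p} for N ∈ Ψ(M). -/
/-!
For fully invariant `N`, `L` one has `N ·_M L ≤ N ⊓ L`, and projectivity makes `·_M` distribute over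
sums on the right, so the fully invariant submodules behave like the two-sided ideals of a ring.
Two consequences drive the argument.

* If `C` is fully invariant and comaximal with `A` and `B`, it is comaximal with `A ·_M B`
  (`sup_smProd_eq_top`). Hence maximal fully invariant submodules are prime, and the family
  defining `Ler N` is directed. This gives the elementwise description
  `n ∈ Ler N ↔ N + Ann_M(Rn) = M` (`mem_Ler_iff`), so that `Ψ(M)` consists of the fully invariant
  submodules fixed by `Ler`.
* Strong harmonicity and compactness make `Λ^{fi}(M)` normal (`fiNormal`), by the two-step covering
  argument that separates disjoint closed sets in a compact Hausdorff space. Normality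
  gives that `N + L = M` implies `Ler N + L = M` (`Ler_sup_eq_top`), so `Ler` is idempotent.

Then `Ler 𝓜` is a point by primeness of `𝓜`, and strong harmonicity separates `Ler 𝓜` from `Ler 𝓝`.
Conversely a point `p` lies in some `𝓜`, so `p = Ler p ≤ Ler 𝓜`. If `𝓜 + Ann_M(K) = M`, normality
splits this by `N', L'` with `N' ·_M L' = 0`, whence `Ler N' ⊓ Ler L' = 0 ≤ p`; the submodule
`Ler N'` is comaximal with `𝓜 ≥ p`, so `Ler L' ≤ p`, and `K ≤ Ler L'`. Thus `p = Ler 𝓜`.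
The open sets match since `m(K)` corresponds to `U(Ler K)`, and `U(N)` to `m(N)`.
-/

open Submodule

variable {R : Type*} [Ring R] {M : Type*} [AddCommGroup M] [Module R M]

/-- The product `N ·_M L = Σ { f(N) : f ∈ Hom_R(M, L) }` of submodules of `M`. -/
def SmProd (N L : Submodule R M) : Submodule R M :=
  ⨆ f : M →ₗ[R] L, N.map (L.subtype ∘ₗ f)

/-- A submodule is fully invariant if it is stable under every endomorphism of `M`. -/
def IsFI (N : Submodule R M) : Prop :=
  ∀ f : M →ₗ[R] M, N.map f ≤ N

/-- `N` is a maximal proper fully invariant submodule of `M`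
(a coatom of the lattice of fully invariant submodules). -/
def IsMaxFI (N : Submodule R M) : Prop :=
  IsFI N ∧ N ≠ ⊤ ∧ ∀ L : Submodule R M, IsFI L → N < L → L = ⊤

/-- `M` is strongly harmonic if for every pair of distinct maximal proper fully invariant
submodules `N, L` there are fully invariant `N', L'` with `N' ⊄ N`, `L' ⊄ L`, `L' ·_M N' = 0`. -/
def StronglyHarmonic (R M : Type*) [Ring R] [AddCommGroup M] [Module R M] : Prop :=
  ∀ N L : Submodule R M, IsMaxFI N → IsMaxFI L → N ≠ L →
    ∃ N' L' : Submodule R M, IsFI N' ∧ IsFI L' ∧ ¬ N' ≤ N ∧ ¬ L' ≤ L ∧ SmProd L' N' = ⊥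

/-- `Ann_M(K) = Σ { L ≤ M : L ·_M K = 0 }`. -/
def AnnM (K : Submodule R M) : Submodule R M :=
  sSup {L : Submodule R M | SmProd L K = ⊥}

/-- `Ler(N) = Σ { K fully invariant : N + Ann_M(K) = M }`. -/
def Ler (N : Submodule R M) : Submodule R M :=
  sSup {K : Submodule R M | IsFI K ∧ N ⊔ AnnM K = ⊤}

/-- `M` is quasi-projective. -/
def QuasiProjective (R M : Type*) [Ring R] [AddCommGroup M] [Module R M] : Prop :=
  ∀ (K : Submodule R M) (h : M →ₗ[R] M ⧸ K), ∃ g : M →ₗ[R] M, K.mkQ ∘ₗ g = h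

/-- The lattice `Λ^{fi}(M)` of fully invariant submodules is compact. -/
def FICompact (R M : Type*) [Ring R] [AddCommGroup M] [Module R M] : Prop :=
  ∀ S : Set (Submodule R M), (∀ N ∈ S, IsFI N) → sSup S = ⊤ →
    ∃ F : Finset (Submodule R M), ↑F ⊆ S ∧ sSup (F : Set (Submodule R M)) = ⊤

/-- The lattice `Λ^{fi}(M)` is normal. -/
def FINormal (R M : Type*) [Ring R] [AddCommGroup M] [Module R M] : Prop :=
  ∀ N L : Submodule R M, IsFI N → IsFI L → N ⊔ L = ⊤ →
    ∃ N' L' : Submodule R M, IsFI N' ∧ IsFI L' ∧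
      N ⊔ L' = ⊤ ∧ N' ⊔ L = ⊤ ∧ SmProd N' L' = ⊥

/-- Gelfand module. -/
def Gelfand (R M : Type*) [Ring R] [AddCommGroup M] [Module R M] : Prop :=
  ∀ N L : Submodule R M, IsCoatom N → IsCoatom L → N ≠ L →
    ∃ N' L' : Submodule R M, IsFI N' ∧ IsFI L' ∧ ¬ N' ≤ N ∧ ¬ L' ≤ L ∧ SmProd L' N' = ⊥

/-- The hull-kernel topology on `mx^{fi}(M)`, generated by the sets
`m(K) = {𝓜 : K ⊄ 𝓜}` for `K` fully invariant. -/
def mxfiTop (R M : Type*) [Ring R] [AddCommGroup M] [Module R M] :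
    TopologicalSpace {N : Submodule R M // IsMaxFI N} :=
  TopologicalSpace.generateFrom
    {U | ∃ K : Submodule R M, IsFI K ∧ U = {𝓜 : {N : Submodule R M // IsMaxFI N} | ¬ K ≤ 𝓜.1}}

/-- The frame `Ψ(M)`. -/
def PsiSet (R M : Type*) [Ring R] [AddCommGroup M] [Module R M] : Set (Submodule R M) :=
  {N | IsFI N ∧ ∀ n ∈ N, N ⊔ AnnM (Submodule.span R {n}) = ⊤}

/-- The points (`∧`-irreducible elements) of `Ψ(M)`. -/
def PsiPt (R M : Type*) [Ring R] [AddCommGroup M] [Module R M] : Set (Submodule R M) :=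
  {p | p ∈ PsiSet R M ∧ p ≠ ⊤ ∧
    ∀ N ∈ PsiSet R M, ∀ L ∈ PsiSet R M, N ⊓ L ≤ p → N ≤ p ∨ L ≤ p}

/-- The topology on the point space of `Ψ(M)`, with opens generated by
`U(N) = {p : N ⊄ p}` for `N ∈ Ψ(M)`. -/
def psiPtTop (R M : Type*) [Ring R] [AddCommGroup M] [Module R M] :
    TopologicalSpace (PsiPt R M) :=
  TopologicalSpace.generateFrom
    {U | ∃ N ∈ PsiSet R M, U = {p : PsiPt R M | ¬ N ≤ p.1}}

section Helpers

/-! ### The product and fully invariant submodules -/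

lemma smProd_le_iff {N L K : Submodule R M} :
    SmProd N L ≤ K ↔ ∀ f : M →ₗ[R] M, (∀ x, f x ∈ L) → ∀ n ∈ N, f n ∈ K := by
  unfold SmProd
  rw [iSup_le_iff]
  constructor
  · intro h f hf n hn
    exact h (f.codRestrict L hf) ⟨n, hn, rfl⟩
  · rintro h f _ ⟨n, hn, rfl⟩
    exact h (L.subtype ∘ₗ f) (fun x => (f x).2) n hn

lemma apply_mem_smProd {N L : Submodule R M} (f : M →ₗ[R] M) (hf : ∀ x, f x ∈ L) {n : M}
    (hn : n ∈ N) : f n ∈ SmProd N L :=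
  smProd_le_iff.1 le_rfl f hf n hn

lemma smProd_eq_bot_iff {N L : Submodule R M} :
    SmProd N L = ⊥ ↔ ∀ f : M →ₗ[R] M, (∀ x, f x ∈ L) → N ≤ LinearMap.ker f := by
  rw [← le_bot_iff, smProd_le_iff]
  rfl

lemma smProd_le_right (N L : Submodule R M) : SmProd N L ≤ L :=
  smProd_le_iff.2 fun _ hf n _ => hf n

lemma smProd_le_left {N : Submodule R M} (hN : IsFI N) (L : Submodule R M) : SmProd N L ≤ N :=
  smProd_le_iff.2 fun f _ n hn => hN f ⟨n, hn, rfl⟩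

lemma sup_smProd_le (A B L : Submodule R M) :
    SmProd (A ⊔ B) L ≤ SmProd A L ⊔ SmProd B L := by
  rw [smProd_le_iff]
  intro f hf n hn
  obtain ⟨a, ha, b, hb, rfl⟩ := Submodule.mem_sup.1 hn
  rw [map_add]
  exact Submodule.add_mem_sup (apply_mem_smProd f hf ha) (apply_mem_smProd f hf hb)

lemma isFI_sup {A B : Submodule R M} (hA : IsFI A) (hB : IsFI B) : IsFI (A ⊔ B) := fun f => by
  rw [Submodule.map_sup]
  exact sup_le_sup (hA f) (hB f)

lemma isFI_inf {A B : Submodule R M} (hA : IsFI A) (hB : IsFI B) : IsFI (A ⊓ B) := fun f =>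
  le_inf ((Submodule.map_mono inf_le_left).trans (hA f))
    ((Submodule.map_mono inf_le_right).trans (hB f))

lemma isFI_sSup {S : Set (Submodule R M)} (hS : ∀ N ∈ S, IsFI N) : IsFI (sSup S) := fun f => by
  rw [Submodule.map_le_iff_le_comap]
  exact sSup_le fun N hN => Submodule.map_le_iff_le_comap.1 ((hS N hN f).trans (le_sSup hN))

lemma isFI_bot : IsFI (⊥ : Submodule R M) := fun f => by simp

/-! ### Annihilators and comaximality -/

lemma le_annM {L K : Submodule R M} (h : SmProd L K = ⊥) : L ≤ AnnM K := le_sSup h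

lemma annM_smProd (K : Submodule R M) : SmProd (AnnM K) K = ⊥ :=
  smProd_eq_bot_iff.2 fun f hf => sSup_le fun _ hL => smProd_eq_bot_iff.1 hL f hf

lemma isFI_annM (K : Submodule R M) : IsFI (AnnM K) := fun g => by
  refine le_annM (smProd_eq_bot_iff.2 ?_)
  rintro f hf _ ⟨n, hn, rfl⟩
  exact smProd_eq_bot_iff.1 (annM_smProd K) (f ∘ₗ g) (fun x => hf _) hn

lemma annM_anti {K L : Submodule R M} (h : K ≤ L) : AnnM L ≤ AnnM K :=
  le_annM (smProd_eq_bot_iff.2 fun f hf =>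
    smProd_eq_bot_iff.1 (annM_smProd L) f fun x => h (hf x))

/-- A map into `A ⊔ B` from a projective module is a sum of maps into `A` and `B`. -/
lemma inf_annM_le [Module.Projective R M] (A B : Submodule R M) :
    AnnM A ⊓ AnnM B ≤ AnnM (A ⊔ B) := by
  refine le_annM (smProd_eq_bot_iff.2 fun f hf n hn => ?_)
  have hr : LinearMap.range (A.subtype.coprod B.subtype) = A ⊔ B := by
    rw [LinearMap.range_coprod, Submodule.range_subtype, Submodule.range_subtype]
  obtain ⟨h, hh⟩ := Module.projective_lifting_property
    (A.subtype.coprod B.subtype).rangeRestrict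
    (f.codRestrict (LinearMap.range (A.subtype.coprod B.subtype)) (fun x => hr ▸ hf x))
    (LinearMap.surjective_rangeRestrict _)
  have h1 : f n = ((h n).1 : M) + ((h n).2 : M) := by
    have := congrArg Subtype.val (LinearMap.congr_fun hh n)
    simpa using this.symm
  have hA : ((h n).1 : M) = 0 := smProd_eq_bot_iff.1 (annM_smProd A)
    (A.subtype ∘ₗ LinearMap.fst R A B ∘ₗ h) (fun x => (h x).1.2) hn.1
  have hB : ((h n).2 : M) = 0 := smProd_eq_bot_iff.1 (annM_smProd B)
    (B.subtype ∘ₗ LinearMap.snd R A B ∘ₗ h) (fun x => (h x).2.2) hn.2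
  rw [LinearMap.mem_ker, h1, hA, hB, add_zero]

/-- The fully invariant closure of `L`, which is `L ·_M M`, has the same annihilator as `L`:
by projectivity a map `M → L ·_M M` is locally a finite sum of maps `g ∘ h` with `h : M → L`. -/
lemma exists_isFI_annM [Module.Projective R M] (L : Submodule R M) :
    ∃ K : Submodule R M, IsFI K ∧ L ≤ K ∧ AnnM L ≤ AnnM K := by
  classical
  let T : ((M →ₗ[R] M) →₀ L) →ₗ[R] M := Finsupp.lsum ℕ fun g => g ∘ₗ L.subtype
  have hT : ∀ g (l : L), T (Finsupp.single g l) = g l := fun g l => by simp [T]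
  refine ⟨LinearMap.range T, ?_, ?_, ?_⟩
  · rintro f _ ⟨_, ⟨x, rfl⟩, rfl⟩
    induction x using Finsupp.induction_linear with
    | zero => simp
    | add x y hx hy => rw [map_add, map_add]; exact add_mem hx hy
    | single g l => exact ⟨Finsupp.single (f ∘ₗ g) l, by rw [hT, hT]; rfl⟩
  · exact fun l hl => ⟨Finsupp.single LinearMap.id ⟨l, hl⟩, by rw [hT]; rfl⟩
  · refine le_annM (smProd_eq_bot_iff.2 fun f hf n hn => ?_)
    obtain ⟨h, hh⟩ := Module.projective_lifting_property T.rangeRestrict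
      (f.codRestrict (LinearMap.range T) hf) (LinearMap.surjective_rangeRestrict _)
    have h1 : f n = T (h n) := (congrArg Subtype.val (LinearMap.congr_fun hh n)).symm
    have h2 : h n = 0 := by
      ext g
      exact smProd_eq_bot_iff.1 (annM_smProd L) (L.subtype ∘ₗ Finsupp.lapply g ∘ₗ h)
        (fun x => (h x g).2) hn
    rw [LinearMap.mem_ker, h1, h2, map_zero]

lemma sup_smProd_eq_top (hgen : ∀ L : Submodule R M, SmProd ⊤ L = L) {C A B : Submodule R M}
    (hC : IsFI C) (hA : C ⊔ A = ⊤) (hB : C ⊔ B = ⊤) : C ⊔ SmProd A B = ⊤ := by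
  rw [eq_top_iff, ← hB]
  refine sup_le le_sup_left ?_
  calc B = SmProd (C ⊔ A) B := by rw [hA, hgen]
    _ ≤ SmProd C B ⊔ SmProd A B := sup_smProd_le _ _ _
    _ ≤ C ⊔ SmProd A B := sup_le_sup_right (smProd_le_left hC B) _

lemma sup_inf_eq_top (hgen : ∀ L : Submodule R M, SmProd ⊤ L = L) {C A B : Submodule R M}
    (hC : IsFI C) (hAf : IsFI A) (hA : C ⊔ A = ⊤) (hB : C ⊔ B = ⊤) : C ⊔ A ⊓ B = ⊤ :=
  top_le_iff.1 ((sup_smProd_eq_top hgen hC hA hB).ge.trans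
    (sup_le_sup_left (le_inf (smProd_le_left hAf B) (smProd_le_right A B)) _))

/-! ### The operator `Ler` -/

lemma isFI_Ler (N : Submodule R M) : IsFI (Ler N) := isFI_sSup fun _ h => h.1

lemma le_Ler {N K : Submodule R M} (hK : IsFI K) (h : N ⊔ AnnM K = ⊤) : K ≤ Ler N :=
  le_sSup ⟨hK, h⟩

lemma Ler_mono {N L : Submodule R M} (h : N ≤ L) : Ler N ≤ Ler L :=
  sSup_le_sSup fun _ hK => ⟨hK.1, top_le_iff.1 (hK.2.ge.trans (sup_le_sup_right h _))⟩

lemma Ler_le (hgen : ∀ L : Submodule R M, SmProd ⊤ L = L) {N : Submodule R M} (hN : IsFI N) :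
    Ler N ≤ N := by
  refine sSup_le fun K hK => ?_
  calc K = SmProd (N ⊔ AnnM K) K := by rw [hK.2, hgen]
    _ ≤ SmProd N K ⊔ SmProd (AnnM K) K := sup_smProd_le _ _ _
    _ ≤ N := by
      rw [annM_smProd, sup_bot_eq]
      exact smProd_le_left hN K

lemma mem_Ler_iff [Module.Projective R M] (hgen : ∀ L : Submodule R M, SmProd ⊤ L = L)
    {N : Submodule R M} (hN : IsFI N) {n : M} :
    n ∈ Ler N ↔ N ⊔ AnnM (Submodule.span R {n}) = ⊤ := by
  constructor
  · intro hn
    have hne : {K : Submodule R M | IsFI K ∧ N ⊔ AnnM K = ⊤}.Nonempty :=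
      ⟨⊥, isFI_bot, top_le_iff.1
        (le_sup_of_le_right (le_annM (le_bot_iff.1 (smProd_le_right _ _))))⟩
    have hdir : DirectedOn (· ≤ ·) {K : Submodule R M | IsFI K ∧ N ⊔ AnnM K = ⊤} := by
      intro A hA B hB
      exact ⟨A ⊔ B, ⟨isFI_sup hA.1 hB.1, top_le_iff.1
        ((sup_inf_eq_top hgen hN (isFI_annM A) hA.2 hB.2).ge.trans
          (sup_le_sup_left (inf_annM_le A B) _))⟩, le_sup_left, le_sup_right⟩
    obtain ⟨K, hK, hnK⟩ := (Submodule.mem_sSup_of_directed hne hdir).1 hn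
    exact top_le_iff.1 (hK.2.ge.trans (sup_le_sup_left
      (annM_anti ((Submodule.span_singleton_le_iff_mem n K).2 hnK)) _))
  · intro h
    obtain ⟨K, hK, hnK, hann⟩ := exists_isFI_annM (Submodule.span R {n})
    exact le_Ler hK (top_le_iff.1 (h.ge.trans (sup_le_sup_left hann _)))
      (hnK (Submodule.mem_span_singleton_self n))

lemma mem_PsiSet_iff [Module.Projective R M] (hgen : ∀ L : Submodule R M, SmProd ⊤ L = L)
    {N : Submodule R M} : N ∈ PsiSet R M ↔ IsFI N ∧ N ≤ Ler N :=
  and_congr_right fun hN => forall₂_congr fun _ _ => (mem_Ler_iff hgen hN).symm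

lemma Ler_inf_Ler_le [Module.Projective R M] (hgen : ∀ L : Submodule R M, SmProd ⊤ L = L)
    {A B : Submodule R M} (hA : IsFI A) (hB : IsFI B) : Ler A ⊓ Ler B ≤ SmProd A B := by
  rintro n ⟨ha, hb⟩
  rw [SetLike.mem_coe, mem_Ler_iff hgen hA, sup_comm] at ha
  rw [SetLike.mem_coe, mem_Ler_iff hgen hB, sup_comm] at hb
  have h := sup_smProd_eq_top hgen (isFI_annM _) ha hb
  -- `span {n} = M ·_M span {n}`, where `M = Ann_M(span {n}) + A ·_M B` and `A ·_M B` is fully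
  -- invariant because `B` is.
  have hn : n ∈ SmProd ⊤ (Submodule.span R {n}) := by
    rw [hgen]; exact Submodule.mem_span_singleton_self n
  rw [← h] at hn
  have hn' := sup_smProd_le _ _ _ hn
  rw [annM_smProd, bot_sup_eq] at hn'
  refine smProd_le_iff.2 (fun f _ => ?_) hn'
  suffices SmProd A B ≤ (SmProd A B).comap f from fun x hx => this hx
  rw [smProd_le_iff]
  intro g hg a haA
  exact apply_mem_smProd (f ∘ₗ g) (fun x => hB f ⟨_, hg x, rfl⟩) haA

/-! ### Maximal fully invariant submodules and normality -/

lemma IsMaxFI.sup_eq_top {P K : Submodule R M} (hP : IsMaxFI P) (hK : IsFI K) (h : ¬ K ≤ P) :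
    P ⊔ K = ⊤ :=
  hP.2.2 _ (isFI_sup hP.1 hK) (left_lt_sup.2 h)

lemma IsMaxFI.not_le_inf (hgen : ∀ L : Submodule R M, SmProd ⊤ L = L) {P A B : Submodule R M}
    (hP : IsMaxFI P) (hA : IsFI A) (hB : IsFI B) (h1 : ¬ A ≤ P) (h2 : ¬ B ≤ P) :
    ¬ A ⊓ B ≤ P := fun h => hP.2.1 <| by
  rw [← sup_inf_eq_top hgen hP.1 hA (hP.sup_eq_top hA h1) (hP.sup_eq_top hB h2)]
  exact (sup_eq_left.2 h).symm

/-- Compactness of `Λ^{fi}(M)` for a family closed under finite sums. -/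
lemma exists_sup_eq_top (hcomp : FICompact R M) (p : Submodule R M → Prop) (hp0 : p ⊥)
    (hp : ∀ A B, p A → p B → p (A ⊔ B)) (hFI : ∀ A, p A → IsFI A) {L : Submodule R M}
    (hL : IsFI L) (h : L ⊔ sSup {A | p A} = ⊤) : ∃ A, p A ∧ L ⊔ A = ⊤ := by
  classical
  obtain ⟨F, hF, hFt⟩ := hcomp (insert L {A | p A})
    (by rintro N (rfl | hN); exacts [hL, hFI N hN]) (by rw [sSup_insert, h])
  have key : ∀ G : Finset (Submodule R M), (G : Set (Submodule R M)) ⊆ insert L {A | p A} →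
      ∃ A, p A ∧ sSup (G : Set (Submodule R M)) ≤ L ⊔ A := by
    intro G
    induction G using Finset.induction_on with
    | empty => exact fun _ => ⟨⊥, hp0, by simp⟩
    | insert a G _ ih =>
      intro hG
      rw [Finset.coe_insert, Set.insert_subset_iff] at hG
      obtain ⟨A, hA, hle⟩ := ih hG.2
      rw [Finset.coe_insert, sSup_insert]
      rcases hG.1 with rfl | ha
      · exact ⟨A, hA, sup_le le_sup_left hle⟩
      · exact ⟨a ⊔ A, hp _ _ ha hA, sup_le (le_sup_of_le_right le_sup_left)
          (hle.trans (sup_le_sup_left le_sup_right _))⟩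
  obtain ⟨A, hA, hle⟩ := key F hF
  exact ⟨A, hA, top_le_iff.1 (hFt.ge.trans hle)⟩

lemma exists_isMaxFI (hcomp : FICompact R M) {N : Submodule R M} (hN : IsFI N) (hne : N ≠ ⊤) :
    ∃ P, IsMaxFI P ∧ N ≤ P := by
  obtain ⟨P, hNP, hP⟩ := zorn_le_nonempty₀ {A : Submodule R M | IsFI A ∧ A ≠ ⊤} (by
    intro c hc hchain y hy
    refine ⟨sSup c, ⟨isFI_sSup fun A hA => (hc hA).1, fun htop => ?_⟩, fun _ => le_sSup⟩
    obtain ⟨F, hF, hFt⟩ := hcomp c (fun A hA => (hc hA).1) htop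
    obtain ⟨B, hB, hle⟩ : ∃ B ∈ c, F.sup id ≤ B :=
      Finset.sup_le_of_le_directed c ⟨y, hy⟩ hchain.directedOn F fun A hA => ⟨A, hF hA, le_rfl⟩
    exact (hc hB).2 (top_le_iff.1 (hFt.ge.trans (F.sup_id_eq_sSup ▸ hle)))) N ⟨hN, hne⟩
  refine ⟨P, ⟨hP.prop.1, hP.prop.2, fun L hL hlt => ?_⟩, hNP⟩
  by_contra hLt
  exact hlt.not_ge (hP.le_of_ge ⟨hL, hLt⟩ hlt.le)

lemma sup_sSup_eq_top (hcomp : FICompact R M) (p : Submodule R M → Prop)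
    (hFI : ∀ A, p A → IsFI A) {L : Submodule R M} (hL : IsFI L)
    (h : ∀ P, IsMaxFI P → L ≤ P → ∃ A, p A ∧ ¬ A ≤ P) : L ⊔ sSup {A | p A} = ⊤ := by
  by_contra hne
  obtain ⟨P, hP, hle⟩ := exists_isMaxFI hcomp (isFI_sup hL (isFI_sSup hFI)) hne
  obtain ⟨A, hA, hAP⟩ := h P hP (le_sup_left.trans hle)
  exact hAP ((le_sSup hA).trans (le_sup_right.trans hle))

lemma smProd_mono_eq_bot {A A' B B' : Submodule R M} (hA : A' ≤ A) (hB : B' ≤ B)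
    (h : SmProd A B = ⊥) : SmProd A' B' = ⊥ :=
  smProd_eq_bot_iff.2 fun f hf => hA.trans (smProd_eq_bot_iff.1 h f fun x => hB (hf x))

lemma sup_smProd_eq_bot {A B L : Submodule R M} (hA : SmProd A L = ⊥) (hB : SmProd B L = ⊥) :
    SmProd (A ⊔ B) L = ⊥ := by
  rw [← le_bot_iff]
  exact (sup_smProd_le A B L).trans (by rw [hA, hB, sup_bot_eq])

lemma smProd_sup_eq_bot [Module.Projective R M] {L A B : Submodule R M} (hA : SmProd L A = ⊥)
    (hB : SmProd L B = ⊥) : SmProd L (A ⊔ B) = ⊥ :=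
  smProd_mono_eq_bot ((le_inf (le_annM hA) (le_annM hB)).trans (inf_annM_le A B)) le_rfl
    (annM_smProd _)

theorem fiNormal [Module.Projective R M] (hgen : ∀ L : Submodule R M, SmProd ⊤ L = L)
    (hsh : StronglyHarmonic R M) (hcomp : FICompact R M) : FINormal R M := by
  intro N L hN hL hNL
  -- Separate a maximal `P ≥ N` from all maximal `Q ≥ L` at once.
  have step : ∀ P, IsMaxFI P → N ≤ P →
      ∃ B, (IsFI B ∧ ∃ A, IsFI A ∧ ¬ A ≤ P ∧ SmProd B A = ⊥) ∧ L ⊔ B = ⊤ := by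
    intro P hP hNP
    have hFI : ∀ B, (IsFI B ∧ ∃ A, IsFI A ∧ ¬ A ≤ P ∧ SmProd B A = ⊥) → IsFI B := fun _ h => h.1
    refine exists_sup_eq_top hcomp
      (fun B => IsFI B ∧ ∃ A, IsFI A ∧ ¬ A ≤ P ∧ SmProd B A = ⊥) ⟨isFI_bot, ⊤, fun _ => le_top,
      fun h => hP.2.1 (top_le_iff.1 h), ?_⟩ ?_ hFI hL (sup_sSup_eq_top hcomp _ hFI hL ?_)
    · exact smProd_eq_bot_iff.2 fun f _ => bot_le
    · rintro B₁ B₂ ⟨h₁, A₁, a₁, b₁, c₁⟩ ⟨h₂, A₂, a₂, b₂, c₂⟩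
      exact ⟨isFI_sup h₁ h₂, A₁ ⊓ A₂, isFI_inf a₁ a₂, hP.not_le_inf hgen a₁ a₂ b₁ b₂,
        sup_smProd_eq_bot (smProd_mono_eq_bot le_rfl inf_le_left c₁)
          (smProd_mono_eq_bot le_rfl inf_le_right c₂)⟩
    · intro Q hQ hLQ
      have hPQ : P ≠ Q := by
        rintro rfl
        exact hP.2.1 (top_le_iff.1 (hNL.ge.trans (sup_le hNP hLQ)))
      obtain ⟨A, B, hA, hB, hAP, hBQ, h⟩ := hsh P Q hP hQ hPQ
      exact ⟨B, ⟨hB, A, hA, hAP, h⟩, hBQ⟩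
  have hFI : ∀ A, (IsFI A ∧ ∃ B, IsFI B ∧ L ⊔ B = ⊤ ∧ SmProd B A = ⊥) → IsFI A := fun _ h => h.1
  obtain ⟨A, ⟨hA, B, hB, hLB, hBA⟩, hNA⟩ := exists_sup_eq_top hcomp
    (fun A => IsFI A ∧ ∃ B, IsFI B ∧ L ⊔ B = ⊤ ∧ SmProd B A = ⊥)
    ⟨isFI_bot, ⊤, fun _ => le_top, sup_top_eq _, hgen ⊥⟩ (by
      rintro A₁ A₂ ⟨h₁, B₁, a₁, b₁, c₁⟩ ⟨h₂, B₂, a₂, b₂, c₂⟩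
      exact ⟨isFI_sup h₁ h₂, B₁ ⊓ B₂, isFI_inf a₁ a₂, sup_inf_eq_top hgen hL a₁ b₁ b₂,
        smProd_sup_eq_bot (smProd_mono_eq_bot inf_le_left le_rfl c₁)
          (smProd_mono_eq_bot inf_le_right le_rfl c₂)⟩) hFI hN
    (sup_sSup_eq_top hcomp _ hFI hN (by
      intro P hP hNP
      obtain ⟨B, ⟨hB, A, hA, hAP, h⟩, hLB⟩ := step P hP hNP
      exact ⟨A, ⟨hA, B, hB, hLB, h⟩, hAP⟩))
  exact ⟨B, A, hB, hA, hNA, sup_comm L B ▸ hLB, hBA⟩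

lemma Ler_sup_eq_top (hn : FINormal R M) {N L : Submodule R M} (hN : IsFI N) (hL : IsFI L)
    (h : L ⊔ N = ⊤) : L ⊔ Ler N = ⊤ := by
  obtain ⟨N', L', -, hL', h1, h2, h3⟩ := hn L N hL hN h
  have : L' ≤ Ler N := le_Ler hL' (top_le_iff.1 (by
    rw [← h2, sup_comm]
    exact sup_le_sup_left (le_annM h3) _))
  exact top_le_iff.1 (h1.ge.trans (sup_le_sup_left this _))

lemma Ler_mem_PsiSet [Module.Projective R M] (hgen : ∀ L : Submodule R M, SmProd ⊤ L = L)
    (hn : FINormal R M) {N : Submodule R M} (hN : IsFI N) : Ler N ∈ PsiSet R M := by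
  refine (mem_PsiSet_iff hgen).2 ⟨isFI_Ler N, fun n h => ?_⟩
  rw [mem_Ler_iff hgen hN, sup_comm] at h
  rw [mem_Ler_iff hgen (isFI_Ler N), sup_comm]
  exact Ler_sup_eq_top hn hN (isFI_annM _) h

lemma le_Ler_iff_of_mem_PsiSet [Module.Projective R M]
    (hgen : ∀ L : Submodule R M, SmProd ⊤ L = L) {N P : Submodule R M} (hN : N ∈ PsiSet R M)
    (hP : IsFI P) : N ≤ Ler P ↔ N ≤ P :=
  ⟨fun h => h.trans (Ler_le hgen hP),
    fun h => ((mem_PsiSet_iff hgen).1 hN).2.trans (Ler_mono h)⟩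

lemma Ler_le_iff_of_isMaxFI (hgen : ∀ L : Submodule R M, SmProd ⊤ L = L) (hn : FINormal R M)
    {K P : Submodule R M} (hK : IsFI K) (hP : IsMaxFI P) : Ler K ≤ P ↔ K ≤ P := by
  refine ⟨fun h => ?_, (Ler_le hgen hK).trans⟩
  by_contra hKP
  exact hP.2.1 (sup_eq_left.2 h ▸ Ler_sup_eq_top hn hK hP.1 (hP.sup_eq_top hK hKP))

/-! ### Points of `Ψ(M)` -/

lemma Ler_mem_PsiPt [Module.Projective R M] (hgen : ∀ L : Submodule R M, SmProd ⊤ L = L)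
    (hn : FINormal R M) {P : Submodule R M} (hP : IsMaxFI P) : Ler P ∈ PsiPt R M := by
  refine ⟨Ler_mem_PsiSet hgen hn hP.1,
    fun h => hP.2.1 (top_le_iff.1 (h.ge.trans (Ler_le hgen hP.1))), fun N hN L hL hle => ?_⟩
  rw [le_Ler_iff_of_mem_PsiSet hgen hN hP.1, le_Ler_iff_of_mem_PsiSet hgen hL hP.1]
  by_contra! h
  exact hP.not_le_inf hgen hN.1 hL.1 h.1 h.2 (hle.trans (Ler_le hgen hP.1))

lemma Ler_injective (hgen : ∀ L : Submodule R M, SmProd ⊤ L = L) (hsh : StronglyHarmonic R M)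
    {P Q : Submodule R M} (hP : IsMaxFI P) (hQ : IsMaxFI Q) (h : Ler P = Ler Q) : P = Q := by
  by_contra hne
  obtain ⟨A, B, hA, hB, hAP, hBQ, hBA⟩ := hsh P Q hP hQ hne
  have : A ≤ Ler Q := le_Ler hA (top_le_iff.1
    ((hQ.sup_eq_top hB hBQ).ge.trans (sup_le_sup_left (le_annM hBA) _)))
  exact hAP ((h ▸ this).trans (Ler_le hgen hP.1))

lemma exists_Ler_eq [Module.Projective R M] (hgen : ∀ L : Submodule R M, SmProd ⊤ L = L)
    (hn : FINormal R M) (hcomp : FICompact R M) {p : Submodule R M} (hp : p ∈ PsiPt R M) :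
    ∃ P, IsMaxFI P ∧ Ler P = p := by
  obtain ⟨hpΨ, hpt, hprime⟩ := hp
  obtain ⟨P, hP, hle⟩ := exists_isMaxFI hcomp hpΨ.1 hpt
  refine ⟨P, hP, le_antisymm (sSup_le fun K hK => ?_)
    ((le_Ler_iff_of_mem_PsiSet hgen hpΨ hP.1).2 hle)⟩
  obtain ⟨N', L', hN', hL', h1, h2, h3⟩ :=
    hn (AnnM K) P (isFI_annM K) hP.1 (by rw [sup_comm]; exact hK.2)
  rcases hprime _ (Ler_mem_PsiSet hgen hn hN') _ (Ler_mem_PsiSet hgen hn hL')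
    ((Ler_inf_Ler_le hgen hN' hL').trans (h3.le.trans bot_le)) with h | h
  · have hN'P := (Ler_le_iff_of_isMaxFI hgen hn hN' hP).1 (h.trans hle)
    exact absurd (sup_eq_right.2 hN'P ▸ h2) hP.2.1
  · exact (le_Ler hK.1 (by rw [sup_comm]; exact h1)).trans h

end Helpers

/-- For `M` projective, every submodule `M`-generated, `M` strongly harmonic
and `Λ^{fi}(M)` compact, the map `𝓜 ↦ Ler 𝓜` is a homeomorphism from `mx^{fi}(M)` (hull-kernel
topology) onto the point space of `Ψ(M)`. -/
theorem mxfi_homeomorph_ptPsi (hproj : Module.Projective R M)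
    (hgen : ∀ L : Submodule R M, SmProd ⊤ L = L)
    (hsh : StronglyHarmonic R M) (hcomp : FICompact R M) :
    letI : TopologicalSpace {N : Submodule R M // IsMaxFI N} := mxfiTop R M
    letI : TopologicalSpace (PsiPt R M) := psiPtTop R M
    ∃ Θ : {N : Submodule R M // IsMaxFI N} ≃ₜ PsiPt R M,
      ∀ 𝓜 : {N : Submodule R M // IsMaxFI N}, ((Θ 𝓜 : PsiPt R M) : Submodule R M) = Ler 𝓜.1 := by
  have hn := fiNormal hgen hsh hcomp
  let _ : TopologicalSpace {N : Submodule R M // IsMaxFI N} := mxfiTop R M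
  let _ : TopologicalSpace (PsiPt R M) := psiPtTop R M
  let e : {N : Submodule R M // IsMaxFI N} ≃ PsiPt R M :=
    Equiv.ofBijective (fun P => ⟨Ler P.1, Ler_mem_PsiPt hgen hn P.2⟩)
      ⟨fun P Q h => Subtype.ext (Ler_injective hgen hsh P.2 Q.2 (congrArg Subtype.val h)),
        fun p => by
          obtain ⟨P, hP, h⟩ := exists_Ler_eq hgen hn hcomp p.2
          exact ⟨⟨P, hP⟩, Subtype.ext h⟩⟩
  have he : ∀ P, (e P : Submodule R M) = Ler P.1 := fun _ => rfl
  refine ⟨⟨e, ?_, ?_⟩, he⟩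
  · refine continuous_generateFrom_iff.2 ?_
    rintro _ ⟨N, hN, rfl⟩
    refine TopologicalSpace.isOpen_generateFrom_of_mem ⟨N, hN.1, ?_⟩
    ext P
    exact not_congr (le_Ler_iff_of_mem_PsiSet hgen hN P.2.1)
  · refine continuous_generateFrom_iff.2 ?_
    rintro _ ⟨K, hK, rfl⟩
    have hΨ := Ler_mem_PsiSet hgen hn hK
    refine TopologicalSpace.isOpen_generateFrom_of_mem ⟨Ler K, hΨ, ?_⟩
    ext p
    obtain ⟨P, rfl⟩ := e.surjective p
    change ¬ K ≤ (e.symm (e P)).1 ↔ ¬ Ler K ≤ Ler P.1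
    rw [e.symm_apply_apply, le_Ler_iff_of_mem_PsiSet hgen hΨ P.2.1,
      Ler_le_iff_of_isMaxFI hgen hn hK P.2]
end

section
/- Let M be a quasi-projective Gelfand left R-module. Then M is quasi-duo: every maximal submodule of M is fully invariant. -/
/-!
Suppose `f` is an endomorphism and `𝓜` a maximal submodule with `f(𝓜) ⊄ 𝓜`. Then `f⁻¹(𝓜)` is again
maximal and differs from `𝓜`, so the Gelfand condition gives fully invariant `N'`, `L'` with
`N' ⊄ f⁻¹(𝓜)`, `L' ⊄ 𝓜` and `L' ·_M N' = 0`. Since `f(N') ⊆ N'` and `f(N') ⊄ 𝓜`, also `N' ⊄ 𝓜`.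
Quasi-projectivity then lifts the quotient map `M → M/𝓜` along the surjection `N' → M/𝓜`
(`exists_lift_of_sup_eq_top`), giving a map `g : M → N'` with `g x ≡ x` modulo `𝓜`. It cannot kill
`L'`, which contradicts `L' ·_M N' = 0` (`smProd_ne_bot`).
-/

open Submodule

variable {R : Type*} [Ring R] {M : Type*} [AddCommGroup M] [Module R M]

/-- If `N + P = M`, the quotient map `M → M/P` lifts to a map from `M` into `N`. The map
`M → M/P ≅ N/(N ∩ P) ↪ M/(N ∩ P)` is lifted to `M` by quasi-projectivity; as `N ∩ P ≤ N`, the lift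
takes values in `N`. -/
lemma exists_lift_of_sup_eq_top (hqp : QuasiProjective R M) {N P : Submodule R M}
    (h : N ⊔ P = ⊤) : ∃ g : M →ₗ[R] M, ∀ x, g x ∈ N ∧ g x - x ∈ P := by
  let φ : N →ₗ[R] M ⧸ P := P.mkQ ∘ₗ N.subtype
  let ψ : N →ₗ[R] M ⧸ (N ⊓ P) := (N ⊓ P).mkQ ∘ₗ N.subtype
  have hφ : ∀ x : M, ∃ n : N, φ n = P.mkQ x := by
    intro x
    obtain ⟨n, hn, p, hp, rfl⟩ := Submodule.mem_sup.1 (h ▸ Submodule.mem_top : x ∈ N ⊔ P)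
    refine ⟨⟨n, hn⟩, ?_⟩
    simp [φ, hp]
  have hsurj : Function.Surjective φ := by
    intro y
    obtain ⟨x, rfl⟩ := P.mkQ_surjective y
    exact hφ x
  have hker : LinearMap.ker φ ≤ LinearMap.ker ψ := by
    intro n hn
    simpa [φ, ψ] using hn
  obtain ⟨g, hg⟩ := hqp (N ⊓ P)
    ((LinearMap.ker φ).liftQ ψ hker ∘ₗ (φ.quotKerEquivOfSurjective hsurj).symm.toLinearMap ∘ₗ P.mkQ)
  refine ⟨g, fun x => ?_⟩
  obtain ⟨n, hn⟩ := hφ x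
  have hgx : (N ⊓ P).mkQ (g x) = (N ⊓ P).mkQ n := by
    have hx := LinearMap.congr_fun hg x
    have hs : (φ.quotKerEquivOfSurjective hsurj).symm (P.mkQ x) = (LinearMap.ker φ).mkQ n := by
      rw [LinearEquiv.symm_apply_eq, ← hn]
      rfl
    simp only [LinearMap.comp_apply, LinearEquiv.coe_coe] at hx
    rw [hx, hs]
    rfl
  have h1 : g x - n ∈ N ⊓ P := (Submodule.Quotient.eq _).1 hgx
  have h2 : (n : M) - x ∈ P := (Submodule.Quotient.eq _).1 hn
  constructor
  · simpa using N.add_mem h1.1 n.2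
  · simpa using P.add_mem h1.2 h2

/-- A maximal submodule behaves like a prime with respect to `·_M` in a quasi-projective module. -/
lemma smProd_ne_bot (hqp : QuasiProjective R M) {P N L : Submodule R M} (hP : IsCoatom P)
    (hN : ¬ N ≤ P) (hL : ¬ L ≤ P) : SmProd L N ≠ ⊥ := by
  intro h0
  obtain ⟨g, hg⟩ := exists_lift_of_sup_eq_top hqp
    (hP.2 (N ⊔ P) (right_lt_sup.2 hN))
  obtain ⟨x, hxL, hxP⟩ := SetLike.not_le_iff_exists.1 hL
  have hmem : g x ∈ SmProd L N :=
    Submodule.mem_iSup_of_mem (g.codRestrict N fun y => (hg y).1) ⟨x, hxL, rfl⟩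
  rw [h0, Submodule.mem_bot] at hmem
  apply hxP
  simpa [hmem] using (hg x).2

/-- The preimage of a maximal submodule is maximal when it is proper, since `M/f⁻¹(P)` embeds in the
simple module `M/P`. -/
lemma isCoatom_comap {P : Submodule R M} (hP : IsCoatom P) (f : M →ₗ[R] M)
    (hf : P.comap f ≠ ⊤) : IsCoatom (P.comap f) := by
  refine ⟨hf, fun K hK => ?_⟩
  obtain ⟨k, hkK, hkP⟩ := SetLike.exists_of_lt hK
  have htop : K.map f ⊔ P = ⊤ :=
    hP.2 _ (right_lt_sup.2 fun hle => hkP (hle ⟨k, hkK, rfl⟩))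
  rw [eq_top_iff]
  intro x _
  obtain ⟨_, ⟨y, hy, rfl⟩, p, hp, hyp⟩ :=
    Submodule.mem_sup.1 (htop ▸ Submodule.mem_top : f x ∈ K.map f ⊔ P)
  have hxy : x - y ∈ P.comap f := by
    simpa [← hyp] using hp
  simpa using K.add_mem (hK.le hxy) hy

/-- A quasi-projective Gelfand module is quasi-duo: every maximal submodule
is fully invariant. -/
theorem gelfand_quasiDuo (hqp : QuasiProjective R M) (hg : Gelfand R M) :
    ∀ 𝓜 : Submodule R M, IsCoatom 𝓜 → IsFI 𝓜 := by
  intro 𝓜 hM f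
  rw [Submodule.map_le_iff_le_comap]
  by_contra hle
  have hcomap : IsCoatom (𝓜.comap f) :=
    isCoatom_comap hM f fun h => hle (h ▸ le_top)
  obtain ⟨N', L', hN', -, hN, hL, h0⟩ := hg (𝓜.comap f) 𝓜 hcomap hM fun h => hle h.ge
  exact smProd_ne_bot hqp hM
    (fun h => hN (Submodule.map_le_iff_le_comap.1 ((hN' f).trans h))) hL h0
end

section
/- Let M be a projective left R-module such that every proper fully invariant submodule of M is contained in a maximal submodule of M. Then M is a Gelfand module if and only if M is strongly harmonic and quasi-duo (every maximal submodule of M is fully invariant). -/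
/-!
Everything rests on a primeness property of maximal submodules of a projective module: if `𝓜` is
maximal and `L ·_M N = 0`, then `L ≤ 𝓜` or `N ≤ 𝓜`. Indeed, if `N ⊄ 𝓜`, then `N → M ⧸ 𝓜` is onto,
so the projection `M → M ⧸ 𝓜` lifts to some `g : M → N`; as `g` kills `L`, so does the projection.

A Gelfand module is then quasi-duo: if an endomorphism `f` does not preserve the maximal
submodule `𝓜`, then `f⁻¹(𝓜)` is a maximal submodule different from `𝓜`. The Gelfand condition for
this pair gives fully invariant `N' ⊄ f⁻¹(𝓜)` and `L' ⊄ 𝓜` with `L' ·_M N' = 0`. Full invariance of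
`N'` gives `N' ⊄ 𝓜`, contradicting primeness.

In a quasi-duo module in which proper fully invariant submodules lie in maximal ones, the maximal
submodules and the maximal fully invariant submodules coincide, so being Gelfand and being
strongly harmonic are the same condition.
-/

open Submodule

variable {R : Type*} [Ring R] {M : Type*} [AddCommGroup M] [Module R M]

theorem SmProd.le_or_le_of_isCoatom
    [Module.Projective R M] {P L N : Submodule R M} (hP : IsCoatom P) (h : SmProd L N = ⊥) :
    L ≤ P ∨ N ≤ P := by
  by_contra! hcon
  obtain ⟨hL, hN⟩ := hcon
  have hsup : N ⊔ P = ⊤ := hP.2 _ (right_lt_sup.2 hN)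
  have hsurj : Function.Surjective (P.mkQ ∘ₗ N.subtype) := by
    rw [← LinearMap.range_eq_top, LinearMap.range_comp, Submodule.range_subtype,
      Submodule.map_mkQ_eq_top, sup_comm, hsup]
  obtain ⟨g, hg⟩ := Module.projective_lifting_property _ P.mkQ hsurj
  refine hL fun x hx => ?_
  have hgx : (g x : M) = 0 := by
    have hmem : (g x : M) ∈ SmProd L N :=
      le_iSup (fun f : M →ₗ[R] N => L.map (N.subtype ∘ₗ f)) g ⟨x, hx, rfl⟩
    rwa [h, Submodule.mem_bot] at hmem
  have hq := LinearMap.congr_fun hg x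
  simp only [LinearMap.comp_apply, Submodule.subtype_apply, hgx, map_zero] at hq
  exact (Submodule.Quotient.mk_eq_zero P).1 hq.symm

/-- Here `M ⧸ f⁻¹(P)` embeds, via `f`, as a nonzero submodule of the simple module `M ⧸ P`. -/
theorem Submodule.isCoatom_comap_of_range_not_le {P : Submodule R M} (hP : IsCoatom P) {f : M →ₗ[R] M}
    (hf : ¬ LinearMap.range f ≤ P) : IsCoatom (P.comap f) := by
  have : IsSimpleModule R (M ⧸ P) := isSimpleModule_iff_isCoatom.2 hP
  have hne : P.mkQ ∘ₗ f ≠ 0 := by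
    intro h0
    apply hf
    rintro _ ⟨x, rfl⟩
    exact (Submodule.Quotient.mk_eq_zero P).1 (LinearMap.congr_fun h0 x)
  have hker : LinearMap.ker (P.mkQ ∘ₗ f) = P.comap f := by
    rw [LinearMap.ker_comp, Submodule.ker_mkQ]
  rw [← hker]
  exact LinearMap.isCoatom_ker_of_surjective (LinearMap.surjective_of_ne_zero hne)

theorem Gelfand.isFI_of_isCoatom
    [Module.Projective R M] (hG : Gelfand R M) {P : Submodule R M} (hP : IsCoatom P) :
    IsFI P := by
  intro f
  by_contra hf
  have hcomap : IsCoatom (P.comap f) :=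
    Submodule.isCoatom_comap_of_range_not_le hP fun h => hf (LinearMap.map_le_range.trans h)
  have hne : P.comap f ≠ P := fun h => hf (Submodule.map_le_iff_le_comap.2 h.ge)
  obtain ⟨N', L', hN', -, hN, hL, h0⟩ := hG _ _ hcomap hP hne
  rcases SmProd.le_or_le_of_isCoatom hP h0 with h | h
  · exact hL h
  · exact hN (Submodule.map_le_iff_le_comap.1 ((hN' f).trans h))

/-- Let `M` be projective and such that every proper fully invariant submodule
is contained in a maximal submodule. Then `M` is Gelfand iff `M` is strongly harmonic and
quasi-duo. -/
theorem gelfand_iff_stronglyHarmonic_quasiDuo (hproj : Module.Projective R M)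
    (hcoat : ∀ N : Submodule R M, IsFI N → N ≠ ⊤ →
      ∃ 𝓜 : Submodule R M, IsCoatom 𝓜 ∧ N ≤ 𝓜) :
    Gelfand R M ↔
      (StronglyHarmonic R M ∧ ∀ 𝓜 : Submodule R M, IsCoatom 𝓜 → IsFI 𝓜) := by
  constructor
  · intro hG
    have hduo : ∀ 𝓜 : Submodule R M, IsCoatom 𝓜 → IsFI 𝓜 := fun _ h => hG.isFI_of_isCoatom h
    have hmax : ∀ N : Submodule R M, IsMaxFI N → IsCoatom N := by
      rintro N ⟨hFI, hne, hN⟩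
      obtain ⟨𝓜, h𝓜, hle⟩ := hcoat N hFI hne
      rcases hle.eq_or_lt with rfl | hlt
      · exact h𝓜
      · exact absurd (hN 𝓜 (hduo 𝓜 h𝓜) hlt) h𝓜.1
    exact ⟨fun N L hN hL => hG N L (hmax N hN) (hmax L hL), hduo⟩
  · rintro ⟨hSH, hduo⟩
    have hmax : ∀ N : Submodule R M, IsCoatom N → IsMaxFI N :=
      fun N hN => ⟨hduo N hN, hN.1, fun L _ => hN.2 L⟩
    exact fun N L hN hL => hSH N L (hmax N hN) (hmax L hL)
end
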